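/- Let α ∈ (2,3), n ≥ 2, and let γ ∈ H^{(α+1)/2,2}(ℝ/ℤ,ℝⁿ) be injective and parametrized by arc-length. Then for every ε > 0 there exists a constant C < ∞ such that |R(γ,h)| ≤ C·‖h‖_{H^{3/2+ε,2}} for all h ∈ H^{3/2+ε,2}(ℝ/ℤ,ℝⁿ); i.e. h ↦ R(γ,h) extends to a bounded linear functional on H^{3/2+ε,2}(ℝ/ℤ,ℝⁿ). -/

import Mathlib

open MeasureTheory Filter Set
open scoped RealInnerProductSpace ENNReal Topology

noncomputable section

/-- `ℝⁿ` -/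
abbrev Rn (n : ℕ) := EuclideanSpace ℝ (Fin n)

variable {n : ℕ}

/-- A 1-periodic curve is injective as a map on `ℝ/ℤ`. -/
def PerInjective (γ : ℝ → Rn n) : Prop :=
  ∀ u v : ℝ, γ u = γ v → ∃ k : ℤ, v = u + k

/-- `γ` is a regular curve: `γ'(u) ≠ 0` for all `u`. -/
def RegularCurve (γ : ℝ → Rn n) : Prop := ∀ u : ℝ, deriv γ u ≠ 0

/-- `γ` is parametrized by arc-length: `|γ'(u)| = 1` for all `u`. -/
def ArcLengthParam (γ : ℝ → Rn n) : Prop := ∀ u : ℝ, ‖deriv γ u‖ = 1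

/-- The length `L(γ) = ∫₀¹ |γ'(θ)| dθ` of the closed curve `γ`. -/
def curveLen (γ : ℝ → Rn n) : ℝ := ∫ θ in (0:ℝ)..1, ‖deriv γ θ‖

/-- The arc length `L(γ|_{[u,u+w]}) = |∫_u^{u+w} |γ'(θ)| dθ|`. -/
def arcLen (γ : ℝ → Rn n) (u w : ℝ) : ℝ := |∫ θ in u..(u + w), ‖deriv γ θ‖|

/-- The intrinsic distance `d_γ(u+w,u)`. -/
def idist (γ : ℝ → Rn n) (u w : ℝ) : ℝ :=
  min (arcLen γ u w) (curveLen γ - arcLen γ u w)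

/-- The integrand of the O'Hara energy `E^α`. -/
def ohIntegrand (α : ℝ) (γ : ℝ → Rn n) (u w : ℝ) : ℝ :=
  (1 / ‖γ (u + w) - γ u‖ ^ α - 1 / idist γ u w ^ α) * ‖deriv γ (u + w)‖ * ‖deriv γ u‖

/-- The O'Hara energy `E^α`, with values in `[0,∞]`. -/
def oharaE (α : ℝ) (γ : ℝ → Rn n) : ℝ≥0∞ :=
  ∫⁻ u in Ioc (0:ℝ) 1, ∫⁻ w in Ioo (-(1:ℝ)/2) (1/2), ENNReal.ofReal (ohIntegrand α γ u w)

/-- The O'Hara energy `E^α` as a real number. -/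
def oharaER (α : ℝ) (γ : ℝ → Rn n) : ℝ := (oharaE α γ).toReal

/-- `[−1/2,−ε] ∪ [ε,1/2]`, the `w`-section of `U_ε`. -/
def Wset (ε : ℝ) : Set ℝ := Icc (-(1:ℝ)/2) (-ε) ∪ Icc ε (1/2)

/-- The truncated O'Hara energy `E^α_ε`, an integral over `U_ε`. -/
def oharaEeps (α ε : ℝ) (γ : ℝ → Rn n) : ℝ :=
  ∫ u in Ioc (0:ℝ) 1, ∫ w in Wset ε, ohIntegrand α γ u w

/-- `F` has directional (Gâteaux) derivative `d` at `γ` in direction `h`. -/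
def HasDirDeriv (F : (ℝ → Rn n) → ℝ) (γ h : ℝ → Rn n) (d : ℝ) : Prop :=
  Tendsto (fun τ : ℝ => (F (γ + τ • h) - F γ) / τ) (𝓝[≠] (0:ℝ)) (𝓝 d)

/-- Squared Gagliardo seminorm `[f]²_{H^{s,2}}` of a 1-periodic map. -/
def gagliardoSq (s : ℝ) {E : Type*} [NormedAddCommGroup E] (f : ℝ → E) : ℝ≥0∞ :=
  ∫⁻ u in Ioc (0:ℝ) 1, ∫⁻ w in Ioo (-(1:ℝ)/2) (1/2),
    ENNReal.ofReal (‖f (u + w) - f u‖ ^ 2 / |w| ^ (1 + 2 * s))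

/-- Membership in the fractional Sobolev space `H^{1+σ,2}(ℝ/ℤ,ℝⁿ)`, `σ ∈ (0,1)`:
a 1-periodic `C¹` function whose derivative has finite Gagliardo seminorm of order `σ`. -/
def MemH1 (σ : ℝ) (γ : ℝ → Rn n) : Prop :=
  Function.Periodic γ 1 ∧ ContDiff ℝ 1 γ ∧ gagliardoSq σ (deriv γ) < ⊤

/-- The norm of `H^{1+σ,2}(ℝ/ℤ,ℝⁿ)`. -/
def H1Norm (σ : ℝ) (γ : ℝ → Rn n) : ℝ :=
  Real.sqrt (∫ u in Ioc (0:ℝ) 1, (‖γ u‖ ^ 2 + ‖deriv γ u‖ ^ 2)) +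
    Real.sqrt ((gagliardoSq σ (deriv γ)).toReal)

/-- Membership of a 1-periodic map in `L²(ℝ/ℤ)`. -/
def MemL2per {E : Type*} [NormedAddCommGroup E] (f : ℝ → E) : Prop :=
  Function.Periodic f 1 ∧ AEStronglyMeasurable f (volume : Measure ℝ) ∧
    IntegrableOn (fun u => ‖f u‖ ^ 2) (Ioc (0:ℝ) 1) volume

/-- Membership in the fractional Sobolev space `H^{s,2}(ℝ/ℤ)`, `s ∈ (0,1)`. -/
def MemHs0 (s : ℝ) {E : Type*} [NormedAddCommGroup E] (f : ℝ → E) : Prop :=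
  MemL2per f ∧ gagliardoSq s f < ⊤

/-- The norm of `H^{s,2}(ℝ/ℤ)` for `s ∈ (0,1)`: `‖f‖_{L²} + [f]_{H^{s,2}}`. -/
def Hs0Norm (s : ℝ) {E : Type*} [NormedAddCommGroup E] (f : ℝ → E) : ℝ :=
  Real.sqrt (∫ u in Ioc (0:ℝ) 1, ‖f u‖ ^ 2) + Real.sqrt ((gagliardoSq s f).toReal)

/-- The `k`-th Fourier coefficient (`j`-th component) of a 1-periodic curve. -/
def fCoef (γ : ℝ → Rn n) (k : ℤ) (j : Fin n) : ℂ :=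
  ∫ u in (0:ℝ)..1, (γ u j : ℂ) * Complex.exp ((-2) * (Real.pi : ℂ) * Complex.I * (k : ℂ) * (u : ℂ))

/-- Membership in `H^{s,2}(ℝ/ℤ,ℝⁿ)` via the Fourier characterization:
`((1+|k|²)^{s/2} γ̂(k))_k ∈ ℓ²`. -/
def MemHF (s : ℝ) (γ : ℝ → Rn n) : Prop :=
  Function.Periodic γ 1 ∧ Continuous γ ∧
    Summable (fun k : ℤ => (1 + (k : ℝ) ^ 2) ^ s * ∑ j, ‖fCoef γ k j‖ ^ 2)

/-- The squared Fourier norm of `H^{s,2}(ℝ/ℤ,ℝⁿ)`. -/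
def fNormSq (s : ℝ) (γ : ℝ → Rn n) : ℝ :=
  ∑' k : ℤ, (1 + (k : ℝ) ^ 2) ^ s * ∑ j, ‖fCoef γ k j‖ ^ 2

/-- C¹-norm of a 1-periodic map. -/
def c1Norm (f : ℝ → Rn n) : ℝ := ⨆ u : Icc (0:ℝ) 1, (‖f u.1‖ + ‖deriv f u.1‖)

/-- The integrand of `Q(γ,h)`. -/
def Qintegrand (α : ℝ) (γ h : ℝ → Rn n) (u w : ℝ) : ℝ :=
  ⟪deriv γ u, deriv h u⟫ / |w| ^ α
    - ⟪γ (u + w) - γ u, h (u + w) - h u⟫ / |w| ^ (α + 2)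

/-- The integrand of `R(γ,h)`. -/
def Rintegrand (α : ℝ) (γ h : ℝ → Rn n) (u w : ℝ) : ℝ :=
  2 * ⟪deriv γ u, deriv h u⟫ * (1 / ‖γ (u + w) - γ u‖ ^ α - 1 / |w| ^ α)
    - α * ⟪γ (u + w) - γ u, h (u + w) - h u⟫ *
        (1 / ‖γ (u + w) - γ u‖ ^ (α + 2) - 1 / |w| ^ (α + 2))

/-- `R(γ,h)`, an absolutely convergent double integral over `(ℝ/ℤ) × [−1/2,1/2]`. -/
def Rval (α : ℝ) (γ h : ℝ → Rn n) : ℝ :=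
  ∫ p in (Ioc (0:ℝ) 1) ×ˢ (Icc (-(1:ℝ)/2) (1/2)), Rintegrand α γ h p.1 p.2

/-- Shrinking the increment variable does not increase a one-dimensional Gagliardo-type integral. -/
theorem lintegral_scale_le {α s : ℝ} (hα : 1 ≤ α) (hs : s ∈ Ioo (0 : ℝ) 1) {F : ℝ → ℝ}
    (hF : Measurable F) :
    ∫⁻ w in Ioo (-(1:ℝ)/2) (1/2), ENNReal.ofReal (F (s * w) / |w| ^ α) ≤
      ∫⁻ w in Ioo (-(1:ℝ)/2) (1/2), ENNReal.ofReal (F w / |w| ^ α) := by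
  obtain ⟨hs0, hs1⟩ := hs
  set Ψ : ℝ → ℝ≥0∞ :=
    (Ioo (-(1:ℝ)/2) (1/2)).indicator fun w => ENNReal.ofReal (F w / |w| ^ α) with hΨ
  have hΨm : Measurable Ψ := Measurable.indicator (by fun_prop) measurableSet_Ioo
  calc ∫⁻ w in Ioo (-(1:ℝ)/2) (1/2), ENNReal.ofReal (F (s * w) / |w| ^ α)
      ≤ ∫⁻ w in Ioo (-(1:ℝ)/2) (1/2), ENNReal.ofReal s * Ψ (s * w) := by
        refine setLIntegral_mono' measurableSet_Ioo fun w hw => ?_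
        have hsw : s * w ∈ Ioo (-(1:ℝ)/2) (1/2) := by
          constructor <;> nlinarith [hw.1, hw.2]
        rw [hΨ, indicator_of_mem hsw, abs_mul, abs_of_pos hs0,
          Real.mul_rpow hs0.le (abs_nonneg w)]
        have key : F (s * w) / |w| ^ α = s ^ α * (F (s * w) / (s ^ α * |w| ^ α)) := by
          have := Real.rpow_pos_of_pos hs0 α
          field_simp
        rw [key, ENNReal.ofReal_mul (by positivity)]
        gcongr
        simpa using Real.rpow_le_rpow_of_exponent_ge hs0 hs1.le hα
    _ ≤ ∫⁻ w, ENNReal.ofReal s * Ψ (s * w) := setLIntegral_le_lintegral _ _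
    _ = ∫⁻ w, Ψ w := by
        conv_rhs => rw [← Real.smul_map_volume_mul_left hs0.ne']
        rw [lintegral_smul_measure, lintegral_map hΨm (by fun_prop),
          lintegral_const_mul _ (by fun_prop), abs_of_pos hs0, smul_eq_mul]
    _ = _ := lintegral_indicator measurableSet_Ioo _

/-- The average of `f` over the segment from `u` to `u + w`. -/
def segAvg (f : ℝ → Rn n) (u w : ℝ) : Rn n := ∫ s in (0:ℝ)..1, f (u + s * w)

theorem continuous_segAvg {f : ℝ → Rn n} (hf : Continuous f) :
    Continuous fun p : ℝ × ℝ => segAvg f p.1 p.2 := by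
  unfold segAvg
  exact intervalIntegral.continuous_parametric_intervalIntegral_of_continuous'
    (f := fun (p : ℝ × ℝ) s => f (p.1 + s * p.2)) (by simp only [Function.uncurry_def]; fun_prop) 0 1

theorem smul_segAvg_deriv {γ : ℝ → Rn n} (hγ : ContDiff ℝ 1 γ) (u w : ℝ) :
    w • segAvg (deriv γ) u w = γ (u + w) - γ u := by
  have h := intervalIntegral.smul_integral_comp_add_mul (a := 0) (b := 1) (deriv γ) w u
  rw [intervalIntegral.integral_deriv_eq_sub
    (fun x _ => (hγ.differentiable one_ne_zero) x)
    ((hγ.continuous_deriv le_rfl).intervalIntegrable _ _)] at h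
  simpa [segAvg, mul_comm] using h

theorem one_sub_norm_segAvg_sq_le {f : ℝ → Rn n} (hf : Continuous f) (h1 : ∀ u, ‖f u‖ = 1)
    (u w : ℝ) :
    1 - ‖segAvg f u w‖ ^ 2 ≤ ∫ s in (0:ℝ)..1, ‖f (u + s * w) - f u‖ ^ 2 := by
  have hint : IntervalIntegrable (fun s => f (u + s * w)) volume 0 1 :=
    Continuous.intervalIntegrable (by fun_prop) _ _
  have hinner : ∫ s in (0:ℝ)..1, ⟪f u, f (u + s * w)⟫ = ⟪f u, segAvg f u w⟫ :=
    (innerSL ℝ (f u)).intervalIntegral_comp_comm hint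
  have hexp : ∫ s in (0:ℝ)..1, ‖f (u + s * w) - f u‖ ^ 2 = 2 - 2 * ⟪f u, segAvg f u w⟫ := by
    have : ∀ s, ‖f (u + s * w) - f u‖ ^ 2 = 2 - 2 * ⟪f u, f (u + s * w)⟫ := fun s => by
      rw [norm_sub_sq_real, h1, h1, real_inner_comm]; ring
    simp_rw [this]
    rw [intervalIntegral.integral_sub (by simp)
      (Continuous.intervalIntegrable (by fun_prop) _ _), intervalIntegral.integral_const_mul, hinner]
    simp
  have hsq := norm_sub_sq_real (f u) (segAvg f u w)
  rw [h1] at hsq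
  nlinarith [sq_nonneg ‖f u - segAvg f u w‖]

theorem norm_segAvg_le_one {f : ℝ → Rn n} (h1 : ∀ u, ‖f u‖ = 1) (u w : ℝ) :
    ‖segAvg f u w‖ ≤ 1 := by
  simpa [segAvg] using
    intervalIntegral.norm_integral_le_of_norm_le_const (a := (0:ℝ)) (b := 1) (C := 1)
      (f := fun s => f (u + s * w)) fun s _ => (h1 _).le

theorem lintegral_one_sub_norm_segAvg_sq_le {α : ℝ} (hα : 1 ≤ α) {f : ℝ → Rn n}
    (hf : Continuous f) (h1 : ∀ u, ‖f u‖ = 1) :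
    ∫⁻ u in Ioc (0:ℝ) 1, ∫⁻ w in Ioo (-(1:ℝ)/2) (1/2),
      ENNReal.ofReal ((1 - ‖segAvg f u w‖ ^ 2) / |w| ^ α) ≤ gagliardoSq ((α - 1) / 2) f := by
  unfold gagliardoSq
  have hexp : 1 + 2 * ((α - 1) / 2) = α := by ring
  rw [hexp]
  refine lintegral_mono fun u => ?_
  calc ∫⁻ w in Ioo (-(1:ℝ)/2) (1/2), ENNReal.ofReal ((1 - ‖segAvg f u w‖ ^ 2) / |w| ^ α)
      ≤ ∫⁻ w in Ioo (-(1:ℝ)/2) (1/2), ∫⁻ s in Ioo (0:ℝ) 1,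
          ENNReal.ofReal (‖f (u + s * w) - f u‖ ^ 2 / |w| ^ α) := by
        refine lintegral_mono fun w => ?_
        rw [← ofReal_integral_eq_lintegral_ofReal]
        · refine ENNReal.ofReal_le_ofReal ?_
          rw [integral_div, ← integral_Ioc_eq_integral_Ioo,
            ← intervalIntegral.integral_of_le zero_le_one]
          gcongr
          exact one_sub_norm_segAvg_sq_le hf h1 u w
        · refine IntegrableOn.mono_set (t := Icc 0 1) ?_ Ioo_subset_Icc_self
          exact Continuous.integrableOn_Icc (by fun_prop)
        · exact Eventually.of_forall fun s => by positivity
    _ = ∫⁻ s in Ioo (0:ℝ) 1, ∫⁻ w in Ioo (-(1:ℝ)/2) (1/2),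
          ENNReal.ofReal (‖f (u + s * w) - f u‖ ^ 2 / |w| ^ α) := by
        refine lintegral_lintegral_swap (Measurable.aemeasurable ?_)
        have := hf.measurable
        simp only [Function.uncurry_def]
        fun_prop
    _ ≤ ∫⁻ _s in Ioo (0:ℝ) 1, ∫⁻ w in Ioo (-(1:ℝ)/2) (1/2),
          ENNReal.ofReal (‖f (u + w) - f u‖ ^ 2 / |w| ^ α) :=
        setLIntegral_mono' measurableSet_Ioo fun s hs =>
          lintegral_scale_le hα hs (F := fun x => ‖f (u + x) - f u‖ ^ 2) (by
            have := hf.measurable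
            fun_prop)
    _ = _ := by simp

/-- Injective arc-length curves satisfy a chord-arc condition. -/
theorem exists_le_norm_segAvg {γ : ℝ → Rn n} (hγ : ContDiff ℝ 1 γ) (hinj : PerInjective γ)
    (harc : ArcLengthParam γ) :
    ∃ c > 0, ∀ u ∈ Ioc (0:ℝ) 1, ∀ w ∈ Icc (-(1:ℝ)/2) (1/2), c ≤ ‖segAvg (deriv γ) u w‖ := by
  have hcont := (continuous_segAvg (hγ.continuous_deriv le_rfl)).norm
  obtain ⟨p, hp, hmin⟩ :=
    (isCompact_Icc.prod isCompact_Icc : IsCompact (Icc (0:ℝ) 1 ×ˢ Icc (-(1:ℝ)/2) (1/2))).exists_isMinOn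
      ⟨(0, 0), by constructor <;> constructor <;> norm_num⟩ hcont.continuousOn
  refine ⟨‖segAvg (deriv γ) p.1 p.2‖, ?_, fun u hu w hw =>
    hmin (a := (u, w)) ⟨Ioc_subset_Icc_self hu, hw⟩⟩
  rw [gt_iff_lt, norm_pos_iff]
  intro h0
  by_cases hw : p.2 = 0
  · have := harc p.1
    simp [segAvg, hw] at h0
    simp [h0] at this
  · have h := smul_segAvg_deriv hγ p.1 p.2
    rw [h0, smul_zero, eq_comm, sub_eq_zero] at h
    obtain ⟨k, hk⟩ := hinj _ _ h
    have hk' : p.2 = -k := by linarith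
    obtain ⟨h1, h2⟩ := hp.2
    rw [hk'] at h1 h2 hw
    have a1 : (-1 : ℝ) < k := by linarith
    have a2 : (k : ℝ) < 1 := by linarith
    have b1 : (-1 : ℤ) < k := by exact_mod_cast a1
    have b2 : k < (1 : ℤ) := by exact_mod_cast a2
    have : k = 0 := by omega
    simp [this] at hw

theorem one_div_rpow_sub_one_le {c x β : ℝ} (hc : 0 < c) (hcx : c ≤ x) (hx : x ≤ 1) (hβ : β ≤ 6) :
    1 / x ^ β - 1 ≤ 3 / c ^ 6 * (1 - x ^ 2) := by
  have hx0 : 0 < x := hc.trans_le hcx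
  have h6 : x ^ (6 : ℕ) ≤ x ^ β := by
    rw [← Real.rpow_natCast]
    exact Real.rpow_le_rpow_of_exponent_ge hx0 hx (by exact_mod_cast hβ)
  have hx2 : x ^ 2 ≤ 1 := pow_le_one₀ hx0.le hx
  calc 1 / x ^ β - 1 ≤ 1 / x ^ 6 - 1 := by gcongr
    _ = (1 + x ^ 2 + x ^ 4) * (1 - x ^ 2) / x ^ 6 := by field_simp; ring
    _ ≤ 3 * (1 - x ^ 2) / c ^ 6 := by
        have : x ^ 4 ≤ 1 := pow_le_one₀ hx0.le hx
        gcongr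
        linarith
    _ = _ := by ring

theorem one_le_one_div_rpow {x β : ℝ} (hx0 : 0 < x) (hx : x ≤ 1) (hβ : 0 ≤ β) :
    1 ≤ 1 / x ^ β :=
  one_le_one_div (Real.rpow_pos_of_pos hx0 β) (Real.rpow_le_one hx0.le hx hβ)

/-- Pointwise bound of the integrand of `R(γ,h)` by the defect `1 - |Δγ/w|²`. -/
theorem abs_Rintegrand_le {α c M : ℝ} (hα : α ∈ Ioo (2:ℝ) 3) (hc : 0 < c) {γ h : ℝ → Rn n}
    (hγ : ContDiff ℝ 1 γ) (harc : ArcLengthParam γ) (hh : ContDiff ℝ 1 h)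
    (hM : ∀ u, ‖deriv h u‖ ≤ M) {u w : ℝ} (hcm : c ≤ ‖segAvg (deriv γ) u w‖) :
    |Rintegrand α γ h u w| ≤
      (2 + α) * M * (3 / c ^ 6) * ((1 - ‖segAvg (deriv γ) u w‖ ^ 2) / |w| ^ α) := by
  obtain ⟨hα2, hα3⟩ := hα
  have hM0 : 0 ≤ M := (norm_nonneg _).trans (hM 0)
  set x := ‖segAvg (deriv γ) u w‖ with hx
  have hx1 : x ≤ 1 := norm_segAvg_le_one harc u w
  have hx0 : 0 < x := hc.trans_le hcm
  have hdef : 0 ≤ 1 - x ^ 2 := sub_nonneg.2 (pow_le_one₀ hx0.le hx1)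
  by_cases hw : w = 0
  · subst hw
    have hα0 : α ≠ 0 := by linarith
    simp [Rintegrand, Real.zero_rpow hα0]
  have hw0 : 0 < |w| := abs_pos.2 hw
  have hΔ : ‖γ (u + w) - γ u‖ = |w| * x := by
    rw [← smul_segAvg_deriv hγ, norm_smul, Real.norm_eq_abs]
  have hΔh : ‖h (u + w) - h u‖ ≤ M * |w| := by
    simpa using Convex.norm_image_sub_le_of_norm_deriv_le (x := u) (y := u + w)
      (fun y _ => (hh.differentiable one_ne_zero) y) (fun y _ => hM y) convex_univ
      (mem_univ _) (mem_univ _)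
  have hpow : ∀ β : ℝ, 1 / (|w| * x) ^ β - 1 / |w| ^ β = (1 / x ^ β - 1) / |w| ^ β := fun β => by
    rw [Real.mul_rpow hw0.le hx0.le]
    have := Real.rpow_pos_of_pos hx0 β
    have := Real.rpow_pos_of_pos hw0 β
    field_simp
  have hβ : ∀ β : ℝ, 0 ≤ β → β ≤ 6 →
      |(1 / x ^ β - 1) / |w| ^ β| ≤ 3 / c ^ 6 * (1 - x ^ 2) / |w| ^ β := fun β h0 h6 => by
    rw [abs_of_nonneg (div_nonneg (sub_nonneg.2 (one_le_one_div_rpow hx0 hx1 h0))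
      (Real.rpow_nonneg hw0.le _))]
    gcongr
    exact one_div_rpow_sub_one_le hc hcm hx1 h6
  have hin1 : |⟪deriv γ u, deriv h u⟫| ≤ M := by
    refine (abs_real_inner_le_norm _ _).trans ?_
    rw [harc u, one_mul]
    exact hM u
  have hin2 : |⟪γ (u + w) - γ u, h (u + w) - h u⟫| ≤ M * |w| ^ 2 := by
    refine (abs_real_inner_le_norm _ _).trans ?_
    rw [hΔ]
    calc |w| * x * ‖h (u + w) - h u‖ ≤ |w| * 1 * (M * |w|) := by gcongr
      _ = _ := by ring
  have hsplit : |w| ^ (α + 2) = |w| ^ α * |w| ^ 2 := by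
    rw [Real.rpow_add hw0]; norm_cast
  unfold Rintegrand
  rw [hΔ, hpow, hpow]
  have h1 := hβ α (by linarith) (by linarith)
  have h2 := hβ (α + 2) (by linarith) (by linarith)
  calc _ ≤ 2 * M * (3 / c ^ 6 * (1 - x ^ 2) / |w| ^ α)
        + α * (M * |w| ^ 2) * (3 / c ^ 6 * (1 - x ^ 2) / |w| ^ (α + 2)) := by
        refine (abs_sub _ _).trans ?_
        rw [abs_mul, abs_mul, abs_mul, abs_mul, abs_two, abs_of_pos (by linarith : 0 < α)]
        gcongr
    _ = _ := by
        rw [hsplit]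
        have := Real.rpow_pos_of_pos hw0 α
        field_simp

/-- Lebesgue integrals of a periodic function over two period intervals agree. -/
theorem setLIntegral_Ioc_of_periodic {f : ℝ → ℝ≥0∞} (hf : Function.Periodic f 1) (a b : ℝ) :
    ∫⁻ x in Ioc a (a + 1), f x = ∫⁻ x in Ioc b (b + 1), f x :=
  IsAddFundamentalDomain.setLIntegral_eq
    (G := AddSubgroup.zmultiples (1 : ℝ)) (isAddFundamentalDomain_Ioc one_pos a)
    (isAddFundamentalDomain_Ioc one_pos b) f hf.map_vadd_zmultiples

section Embedding

variable {E : Type*} [NormedAddCommGroup E]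

/-- The part of the Gagliardo seminorm living on the triangle over `(u, u + 1/2)`. -/
theorem lintegral_triangle_le_gagliardoSq {s : ℝ} {f : ℝ → E} (hf : Continuous f)
    (hper : Function.Periodic f 1) (u : ℝ) :
    ∫⁻ r in Ioo (0:ℝ) (1/2), ∫⁻ t in Ioo (0:ℝ) r,
      ENNReal.ofReal (‖f (u + r) - f (u + t)‖ ^ 2 / (r - t) ^ (1 + 2 * s)) ≤ gagliardoSq s f := by
  set Φ : ℝ → ℝ → ℝ≥0∞ := fun x w =>
    ENNReal.ofReal (‖f (x + w) - f x‖ ^ 2 / |w| ^ (1 + 2 * s)) with hΦ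
  have hΦm : Measurable (Function.uncurry Φ) := by
    simp only [hΦ, Function.uncurry_def]
    have : Measurable fun p : ℝ × ℝ => ‖f (p.1 + p.2) - f p.1‖ :=
      Continuous.measurable (by fun_prop)
    fun_prop
  set I : Set ℝ := Ioo (-(1:ℝ)/2) (1/2) with hI
  have hIm : Measurable (Function.uncurry fun x w => I.indicator (Φ x) w) := by
    have : (Function.uncurry fun x w => I.indicator (Φ x) w)
        = (Prod.snd ⁻¹' I).indicator (Function.uncurry Φ) := by
      ext ⟨x, w⟩
      simp [indicator]
    rw [this]
    exact hΦm.indicator (measurable_snd measurableSet_Ioo)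
  calc _ ≤ ∫⁻ r in Ioo (0:ℝ) (1/2), ∫⁻ t in Ioo (0:ℝ) (1/2), I.indicator (Φ (u + t)) (r - t) := by
        refine setLIntegral_mono' measurableSet_Ioo fun r hr => ?_
        refine (setLIntegral_mono' measurableSet_Ioo fun t ht => ?_).trans
          (lintegral_mono_set (Ioo_subset_Ioo_right hr.2.le))
        have hmem : r - t ∈ I := ⟨by linarith [ht.1, ht.2], by linarith [ht.1, hr.2]⟩
        rw [indicator_of_mem hmem]
        simp only [hΦ]
        rw [abs_of_pos (sub_pos.2 ht.2), show u + t + (r - t) = u + r by ring]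
    _ = ∫⁻ t in Ioo (0:ℝ) (1/2), ∫⁻ r in Ioo (0:ℝ) (1/2), I.indicator (Φ (u + t)) (r - t) :=
        lintegral_lintegral_swap (hIm.comp (g := Function.uncurry fun x w => I.indicator (Φ x) w)
          (f := fun p : ℝ × ℝ => (u + p.2, p.1 - p.2)) (by fun_prop)).aemeasurable
    _ ≤ ∫⁻ t in Ioo (0:ℝ) (1/2), ∫⁻ w in I, Φ (u + t) w := by
        refine lintegral_mono fun t => (setLIntegral_le_lintegral _ _).trans ?_
        rw [lintegral_sub_right_eq_self (fun w => I.indicator (Φ (u + t)) w),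
          lintegral_indicator measurableSet_Ioo]
    _ ≤ ∫⁻ t in Ioc (0:ℝ) (0 + 1), ∫⁻ w in I, Φ (u + t) w :=
        lintegral_mono_set fun t ht => ⟨ht.1, by linarith [ht.2]⟩
    _ = ∫⁻ t in Ioc (-u) (-u + 1), ∫⁻ w in I, Φ (u + t) w := by
        refine setLIntegral_Ioc_of_periodic (f := fun t => ∫⁻ w in I, Φ (u + t) w) (fun t => ?_) _ _
        simp only [hΦ]
        refine lintegral_congr fun w => ?_
        rw [show u + (t + 1) + w = u + t + w + 1 by ring, ← add_assoc, hper, hper]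
    _ = ∫⁻ x in Ioc (0:ℝ) 1, ∫⁻ w in I, Φ x w := by
        have hpre : (fun t => u + t) ⁻¹' Ioc (0:ℝ) 1 = Ioc (-u) (-u + 1) := by
          ext t; simp only [mem_preimage, mem_Ioc]; constructor <;> rintro ⟨h1, h2⟩ <;>
            constructor <;> linarith
        rw [← hpre]
        exact (measurePreserving_add_left volume u).setLIntegral_comp_preimage_emb
          (measurableEmbedding_addLeft u) (fun x => ∫⁻ w in I, Φ x w) (Ioc 0 1)

variable [NormedSpace ℝ E] [CompleteSpace E]

theorem hasDerivAt_average {f : ℝ → E} (hf : Continuous f) (u : ℝ) {r : ℝ} (hr : 0 < r) :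
    HasDerivAt (fun r : ℝ => r⁻¹ • ∫ x in (0:ℝ)..r, f (u + x))
      ((r ^ 2)⁻¹ • ∫ x in (0:ℝ)..r, (f (u + r) - f (u + x))) r := by
  have hfu : Continuous fun x => f (u + x) := by fun_prop
  have h1 : HasDerivAt (fun r : ℝ => ∫ x in (0:ℝ)..r, f (u + x)) (f (u + r)) r :=
    intervalIntegral.integral_hasDerivAt_right (hfu.intervalIntegrable _ _)
      (hfu.stronglyMeasurableAtFilter _ _) hfu.continuousAt
  refine HasDerivAt.congr_deriv ((hasDerivAt_inv hr.ne').smul h1) ?_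
  rw [intervalIntegral.integral_sub (by simp) (hfu.intervalIntegrable _ _),
    intervalIntegral.integral_const, smul_sub, sub_zero, smul_smul, neg_smul, sub_eq_add_neg]
  congr 2
  field_simp

theorem tendsto_average {f : ℝ → E} (hf : Continuous f) (u : ℝ) :
    Tendsto (fun r : ℝ => r⁻¹ • ∫ x in (0:ℝ)..r, f (u + x)) (𝓝[>] 0) (𝓝 (f u)) := by
  have hfu : Continuous fun x => f (u + x) := by fun_prop
  have h1 : HasDerivAt (fun r : ℝ => ∫ x in (0:ℝ)..r, f (u + x)) (f (u + 0)) 0 :=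
    intervalIntegral.integral_hasDerivAt_right (hfu.intervalIntegrable _ _)
      (hfu.stronglyMeasurableAtFilter _ _) hfu.continuousAt
  rw [hasDerivAt_iff_tendsto_slope_zero] at h1
  simpa using h1.mono_left (nhdsGT_le_nhdsNE 0)

/-- A function differs from its average over `(u, u + 1/2)` by at most a triangle integral. -/
theorem enorm_average_sub_le {f : ℝ → E} (hf : Continuous f) (u : ℝ) :
    ‖((1:ℝ)/2)⁻¹ • (∫ x in (0:ℝ)..(1/2), f (u + x)) - f u‖ₑ ≤
      ∫⁻ r in Ioo (0:ℝ) (1/2), ∫⁻ t in Ioo (0:ℝ) r,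
        ENNReal.ofReal (‖f (u + r) - f (u + t)‖ / r ^ 2) := by
  refine le_of_tendsto ((tendsto_const_nhds.sub (tendsto_average hf u)).enorm) ?_
  filter_upwards [Ioo_mem_nhdsGT (show (0:ℝ) < 1/2 by norm_num)] with δ hδ
  have hcont : ContinuousOn (fun r : ℝ => (r ^ 2)⁻¹ • ∫ x in (0:ℝ)..r, (f (u + r) - f (u + x)))
      (uIcc δ (1/2)) := by
    have h2 : Continuous fun r : ℝ => ∫ x in (0:ℝ)..r, (f (u + r) - f (u + x)) :=
      intervalIntegral.continuous_parametric_intervalIntegral_of_continuous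
        (f := fun r x => f (u + r) - f (u + x))
        (by simp only [Function.uncurry_def]; fun_prop) continuous_id
    refine ContinuousOn.smul (ContinuousOn.inv₀ (by fun_prop) fun r hr => ?_) h2.continuousOn
    rw [uIcc_of_le hδ.2.le] at hr
    have : 0 < r := hδ.1.trans_le hr.1
    positivity
  rw [← intervalIntegral.integral_eq_sub_of_hasDerivAt (fun r hr => hasDerivAt_average hf u
    (hδ.1.trans_le (by rw [uIcc_of_le hδ.2.le] at hr; exact hr.1))) hcont.intervalIntegrable,
    intervalIntegral.integral_of_le hδ.2.le, integral_Ioc_eq_integral_Ioo]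
  refine (enorm_integral_le_lintegral_enorm _).trans ?_
  refine (lintegral_mono_set (Ioo_subset_Ioo_left hδ.1.le)).trans ?_
  refine setLIntegral_mono' measurableSet_Ioo fun r hr => ?_
  rw [← intervalIntegral.integral_smul, intervalIntegral.integral_of_le hr.1.le,
    integral_Ioc_eq_integral_Ioo]
  refine (enorm_integral_le_lintegral_enorm _).trans (lintegral_mono fun t => ?_)
  rw [← ofReal_norm, norm_smul, norm_inv, Real.norm_of_nonneg (by positivity),
    inv_mul_eq_div]

/-- Weighted Young inequality for the triangle integrand. -/
theorem div_sq_le_young {a r t s lam : ℝ} (hs : 1/2 < s) (hl : 0 < lam) (ht0 : 0 < t)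
    (htr : t < r) :
    a / r ^ 2 ≤ lam * (a ^ 2 / (r - t) ^ (1 + 2 * s)) + lam⁻¹ * r ^ (2 * s - 3) := by
  have hd : 0 < r - t := sub_pos.2 htr
  have hr : 0 < r := ht0.trans htr
  set d := (r - t) ^ (1 + 2 * s) with hdd
  have hd0 : 0 < d := Real.rpow_pos_of_pos hd _
  have hle : d / r ^ 4 ≤ r ^ (2 * s - 3) := by
    rw [show 2 * s - 3 = (1 + 2 * s) - (4 : ℕ) by push_cast; ring, Real.rpow_sub hr,
      Real.rpow_natCast]
    gcongr
    exact Real.rpow_le_rpow hd.le (by linarith) (by linarith)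
  calc a / r ^ 2 ≤ lam * (a ^ 2 / d) + lam⁻¹ * (d / r ^ 4) := by
        have h := sq_nonneg (lam * a * r ^ 2 - d)
        have h' := sq_nonneg (lam * a * r ^ 2)
        have h'' := sq_nonneg d
        rw [← sub_nonneg]
        have : lam * (a ^ 2 / d) + lam⁻¹ * (d / r ^ 4) - a / r ^ 2 =
            ((lam * a * r ^ 2) ^ 2 + d ^ 2 - lam * a * r ^ 2 * d) / (lam * d * r ^ 4) := by
          field_simp
        rw [this]
        refine div_nonneg (by nlinarith) (by positivity)
    _ ≤ _ := by gcongr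

theorem lintegral_rpow_lt_top {s : ℝ} (hs : 1/2 < s) :
    ∫⁻ r in Ioo (0:ℝ) (1/2), ENNReal.ofReal (r * r ^ (2 * s - 3)) < ⊤ := by
  have h : IntegrableOn (fun r : ℝ => r ^ (2 * s - 2)) (Ioo 0 (1/2)) := by
    have := intervalIntegral.intervalIntegrable_rpow' (a := 0) (b := 1/2)
      (show -1 < 2 * s - 2 by linarith)
    rw [intervalIntegrable_iff_integrableOn_Ioo_of_le (by norm_num)] at this
    exact this
  refine lt_of_eq_of_lt (setLIntegral_congr_fun measurableSet_Ioo fun r hr => ?_)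
    h.hasFiniteIntegral
  have : r * r ^ (2 * s - 3) = r ^ (2 * s - 2) := by
    rw [show 2 * s - 2 = 1 + (2 * s - 3) by ring, Real.rpow_add hr.1, Real.rpow_one]
  simp only [this]
  rw [Real.enorm_of_nonneg (Real.rpow_nonneg hr.1.le _)]

/-- Sobolev embedding `H^{s,2}(ℝ/ℤ) ⊂ L^∞` for `s > 1/2`, for continuous periodic functions. -/
theorem exists_norm_le_Hs0Norm {s : ℝ} (hs : 1/2 < s) :
    ∃ C ≥ 0, ∀ f : ℝ → E, Continuous f → Function.Periodic f 1 → gagliardoSq s f < ⊤ →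
      ∀ u, ‖f u‖ ≤ C * Hs0Norm s f := by
  set K := ∫⁻ r in Ioo (0:ℝ) (1/2), ENNReal.ofReal (r * r ^ (2 * s - 3)) with hK
  have hKtop : K < ⊤ := lintegral_rpow_lt_top hs
  refine ⟨2 + (1 + K.toReal), by positivity, fun f hf hper hG u => ?_⟩
  set G := (gagliardoSq s f).toReal
  set L := √(∫ x in Ioc (0:ℝ) 1, ‖f x‖ ^ 2)
  set A := ((1:ℝ)/2)⁻¹ • (∫ x in (0:ℝ)..(1/2), f (u + x)) with hA
  have hyoung : ∀ lam : ℝ, 0 < lam → ‖A - f u‖ ≤ lam * G + lam⁻¹ * K.toReal := by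
    intro lam hl
    have hE : ‖A - f u‖ₑ ≤ ENNReal.ofReal lam * gagliardoSq s f + ENNReal.ofReal lam⁻¹ * K := by
      calc ‖A - f u‖ₑ ≤ _ := enorm_average_sub_le hf u
        _ ≤ ∫⁻ r in Ioo (0:ℝ) (1/2), (ENNReal.ofReal lam * (∫⁻ t in Ioo (0:ℝ) r,
              ENNReal.ofReal (‖f (u + r) - f (u + t)‖ ^ 2 / (r - t) ^ (1 + 2 * s))) +
              ENNReal.ofReal lam⁻¹ * ENNReal.ofReal (r * r ^ (2 * s - 3))) := by
            refine setLIntegral_mono' measurableSet_Ioo fun r hr => ?_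
            calc _ ≤ ∫⁻ t in Ioo (0:ℝ) r, (ENNReal.ofReal lam *
                  ENNReal.ofReal (‖f (u + r) - f (u + t)‖ ^ 2 / (r - t) ^ (1 + 2 * s)) +
                  ENNReal.ofReal lam⁻¹ * ENNReal.ofReal (r ^ (2 * s - 3))) := by
                  refine setLIntegral_mono' measurableSet_Ioo fun t ht => ?_
                  have h1 := Real.rpow_nonneg (sub_pos.2 ht.2).le (1 + 2 * s)
                  have h2 := Real.rpow_nonneg hr.1.le (2 * s - 3)
                  rw [← ENNReal.ofReal_mul hl.le, ← ENNReal.ofReal_mul (by positivity),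
                    ← ENNReal.ofReal_add (by positivity) (by positivity)]
                  exact ENNReal.ofReal_le_ofReal (div_sq_le_young hs hl ht.1 ht.2)
              _ = _ := by
                  rw [lintegral_add_right _ measurable_const,
                    lintegral_const_mul' _ _ ENNReal.ofReal_ne_top, setLIntegral_const,
                    Real.volume_Ioo, sub_zero, ENNReal.ofReal_mul hr.1.le]
                  ring
        _ = ENNReal.ofReal lam * (∫⁻ r in Ioo (0:ℝ) (1/2), ∫⁻ t in Ioo (0:ℝ) r,
              ENNReal.ofReal (‖f (u + r) - f (u + t)‖ ^ 2 / (r - t) ^ (1 + 2 * s))) +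
              ENNReal.ofReal lam⁻¹ * K := by
            rw [lintegral_add_right _ (by fun_prop),
              lintegral_const_mul' _ _ ENNReal.ofReal_ne_top,
              lintegral_const_mul' _ _ ENNReal.ofReal_ne_top]
        _ ≤ _ := by
            gcongr
            exact lintegral_triangle_le_gagliardoSq hf hper u
    have htop : ENNReal.ofReal lam * gagliardoSq s f + ENNReal.ofReal lam⁻¹ * K ≠ ⊤ :=
      ENNReal.add_ne_top.2 ⟨ENNReal.mul_ne_top ENNReal.ofReal_ne_top hG.ne,
        ENNReal.mul_ne_top ENNReal.ofReal_ne_top hKtop.ne⟩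
    have := ENNReal.toReal_mono htop hE
    rwa [toReal_enorm, ENNReal.toReal_add
      (ENNReal.mul_ne_top ENNReal.ofReal_ne_top hG.ne)
      (ENNReal.mul_ne_top ENNReal.ofReal_ne_top hKtop.ne), ENNReal.toReal_mul, ENNReal.toReal_mul,
      ENNReal.toReal_ofReal hl.le, ENNReal.toReal_ofReal (by positivity)] at this
  have hG0 : 0 ≤ G := ENNReal.toReal_nonneg
  have hK0 : 0 ≤ K.toReal := ENNReal.toReal_nonneg
  have hdiff : ‖A - f u‖ ≤ (1 + K.toReal) * √G := by
    refine le_of_forall_gt_imp_ge_of_dense fun b hb => ?_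
    have hb' : √G < b / (1 + K.toReal) := by rw [lt_div_iff₀ (by positivity)]; linarith
    set N := b / (1 + K.toReal) with hN
    have hN0 : 0 < N := (Real.sqrt_nonneg _).trans_lt hb'
    have hGN : G ≤ N * N := by
      have := Real.sq_sqrt hG0
      nlinarith [Real.sqrt_nonneg G]
    have h := hyoung N⁻¹ (inv_pos.2 hN0)
    calc ‖A - f u‖ ≤ N⁻¹ * (N * N) + N⁻¹⁻¹ * K.toReal := h.trans (by gcongr)
      _ = (1 + K.toReal) * N := by field_simp
      _ = b := by rw [hN]; field_simp
  have hAle : ‖A‖ ≤ 2 * L := by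
    have hnf : Continuous fun x => ‖f x‖ := hf.norm
    have h1 : ‖∫ x in (0:ℝ)..(1/2), f (u + x)‖ ≤ ∫ x in (0:ℝ)..1, ‖f x‖ := by
      calc ‖∫ x in (0:ℝ)..(1/2), f (u + x)‖ ≤ ∫ x in (0:ℝ)..(1/2), ‖f (u + x)‖ :=
            intervalIntegral.norm_integral_le_integral_norm (by norm_num)
        _ ≤ ∫ x in (0:ℝ)..1, ‖f (u + x)‖ := by
            refine intervalIntegral.integral_mono_interval le_rfl (by norm_num) (by norm_num)
              (Eventually.of_forall fun x => norm_nonneg _)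
              (Continuous.intervalIntegrable (by fun_prop) _ _)
        _ = ∫ x in u..u + 1, ‖f x‖ := by
            rw [intervalIntegral.integral_comp_add_left (fun x => ‖f x‖), add_zero]
        _ = ∫ x in (0:ℝ)..0 + 1, ‖f x‖ :=
            Function.Periodic.intervalIntegral_add_eq (fun x => by rw [hper]) u 0
        _ = _ := by rw [zero_add]
    set J := ∫ x in (0:ℝ)..1, ‖f x‖ with hJ
    have h2 : J ≤ L := by
      refine Real.le_sqrt_of_sq_le ?_
      have hvar : 0 ≤ ∫ x in (0:ℝ)..1, (‖f x‖ - J) ^ 2 :=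
        intervalIntegral.integral_nonneg zero_le_one fun x _ => sq_nonneg _
      have : ∀ x, (‖f x‖ - J) ^ 2 = (‖f x‖ ^ 2 - 2 * J * ‖f x‖) + J ^ 2 := fun x => by ring
      simp_rw [this] at hvar
      rw [intervalIntegral.integral_add (Continuous.intervalIntegrable (by fun_prop) _ _) (by simp),
        intervalIntegral.integral_sub (Continuous.intervalIntegrable (by fun_prop) _ _)
        (Continuous.intervalIntegrable (by fun_prop) _ _),
        intervalIntegral.integral_const_mul, ← hJ, intervalIntegral.integral_const,
        intervalIntegral.integral_of_le zero_le_one] at hvar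
      simp only [sub_zero, one_smul] at hvar
      linarith
    rw [hA, norm_smul, one_div, inv_inv, Real.norm_two, ← one_div]
    linarith
  have hL0 : 0 ≤ L := Real.sqrt_nonneg _
  calc ‖f u‖ = ‖A - (A - f u)‖ := by congr 1; abel
    _ ≤ ‖A‖ + ‖A - f u‖ := norm_sub_le _ _
    _ ≤ 2 * L + (1 + K.toReal) * √G := add_le_add hAle hdiff
    _ ≤ (2 + (1 + K.toReal)) * (L + √G) := by
        have := Real.sqrt_nonneg G
        have : 0 ≤ (1 + K.toReal) * L := by positivity
        nlinarith

end Embedding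

theorem Hs0Norm_deriv_le_H1Norm {σ : ℝ} {h : ℝ → Rn n} (hh : ContDiff ℝ 1 h) :
    Hs0Norm σ (deriv h) ≤ H1Norm σ h := by
  have hc := hh.continuous
  have hd := hh.continuous_deriv le_rfl
  unfold Hs0Norm H1Norm
  have hint : ∀ g : ℝ → ℝ, Continuous g → IntegrableOn g (Ioc 0 1) := fun g hg =>
    hg.integrableOn_Icc.mono_set Ioc_subset_Icc_self
  have hle : ∫ u in Ioc (0:ℝ) 1, ‖deriv h u‖ ^ 2 ≤
      ∫ u in Ioc (0:ℝ) 1, (‖h u‖ ^ 2 + ‖deriv h u‖ ^ 2) :=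
    integral_mono (hint _ (by fun_prop)) (hint _ (by fun_prop)) fun u =>
      le_add_of_nonneg_left (sq_nonneg _)
  gcongr

theorem measurable_Rintegrand {α : ℝ} {γ h : ℝ → Rn n} (hγ : ContDiff ℝ 1 γ)
    (hh : ContDiff ℝ 1 h) : Measurable fun p : ℝ × ℝ => Rintegrand α γ h p.1 p.2 := by
  have hγc := hγ.continuous
  have hhc := hh.continuous
  have hγd := hγ.continuous_deriv le_rfl
  have hhd := hh.continuous_deriv le_rfl
  have m1 : Measurable fun p : ℝ × ℝ => ⟪deriv γ p.1, deriv h p.1⟫ :=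
    Continuous.measurable (by fun_prop)
  have m2 : Measurable fun p : ℝ × ℝ => ⟪γ (p.1 + p.2) - γ p.1, h (p.1 + p.2) - h p.1⟫ :=
    Continuous.measurable (by fun_prop)
  have m3 : Measurable fun p : ℝ × ℝ => ‖γ (p.1 + p.2) - γ p.1‖ :=
    Continuous.measurable (by fun_prop)
  unfold Rintegrand
  fun_prop

/-- The absolute integral of the integrand of `R(γ,h)` is bounded via the sup norm of the derivative. -/
theorem lintegral_enorm_Rintegrand_le {α c M : ℝ} (hα : α ∈ Ioo (2:ℝ) 3) (hc : 0 < c)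
    {γ h : ℝ → Rn n} (hγ : ContDiff ℝ 1 γ) (harc : ArcLengthParam γ) (hh : ContDiff ℝ 1 h)
    (hM : ∀ u, ‖deriv h u‖ ≤ M)
    (hcm : ∀ u ∈ Ioc (0:ℝ) 1, ∀ w ∈ Icc (-(1:ℝ)/2) (1/2), c ≤ ‖segAvg (deriv γ) u w‖) :
    ∫⁻ p in (Ioc (0:ℝ) 1) ×ˢ (Icc (-(1:ℝ)/2) (1/2)), ‖Rintegrand α γ h p.1 p.2‖ₑ ≤
      ENNReal.ofReal ((2 + α) * M * (3 / c ^ 6)) * gagliardoSq ((α - 1) / 2) (deriv γ) := by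
  have hM0 : 0 ≤ M := (norm_nonneg _).trans (hM 0)
  have hα0 : 0 < 2 + α := by linarith [hα.1]
  rw [Measure.volume_eq_prod, ← Measure.prod_restrict,
    lintegral_prod _ (measurable_Rintegrand hγ hh).enorm.aemeasurable]
  calc _ ≤ ∫⁻ u in Ioc (0:ℝ) 1, ∫⁻ w in Icc (-(1:ℝ)/2) (1/2),
        ENNReal.ofReal ((2 + α) * M * (3 / c ^ 6)) *
          ENNReal.ofReal ((1 - ‖segAvg (deriv γ) u w‖ ^ 2) / |w| ^ α) := by
        refine setLIntegral_mono' measurableSet_Ioc fun u hu =>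
          setLIntegral_mono' measurableSet_Icc fun w hw => ?_
        rw [← ENNReal.ofReal_mul (by positivity), Real.enorm_eq_ofReal_abs]
        exact ENNReal.ofReal_le_ofReal (abs_Rintegrand_le hα hc hγ harc hh hM (hcm u hu w hw))
    _ = ENNReal.ofReal ((2 + α) * M * (3 / c ^ 6)) * ∫⁻ u in Ioc (0:ℝ) 1,
        ∫⁻ w in Ioo (-(1:ℝ)/2) (1/2),
          ENNReal.ofReal ((1 - ‖segAvg (deriv γ) u w‖ ^ 2) / |w| ^ α) := by
        simp_rw [lintegral_const_mul' _ _ ENNReal.ofReal_ne_top, restrict_Ioo_eq_restrict_Icc]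
    _ ≤ _ := by
        gcongr
        exact lintegral_one_sub_norm_segAvg_sq_le (by linarith [hα.1])
          (hγ.continuous_deriv le_rfl) harc

/-- For an injective arc-length curve `γ ∈ H^{(α+1)/2,2}` and every `ε > 0`,
`h ↦ R(γ,h)` is a bounded linear functional on `H^{3/2+ε,2}`. -/
theorem statement12 {n : ℕ} (hn : 2 ≤ n) {α : ℝ} (hα : α ∈ Ioo (2:ℝ) 3)
    {γ : ℝ → Rn n} (hγ : MemH1 ((α - 1) / 2) γ) (hinj : PerInjective γ)
    (harc : ArcLengthParam γ) :
    ∀ ε > (0:ℝ), ∃ C : ℝ,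
      ∀ h : ℝ → Rn n, MemH1 (1/2 + ε) h →
        IntegrableOn (fun p : ℝ × ℝ => Rintegrand α γ h p.1 p.2)
          ((Ioc (0:ℝ) 1) ×ˢ (Icc (-(1:ℝ)/2) (1/2))) volume ∧
        |Rval α γ h| ≤ C * H1Norm (1/2 + ε) h := by
  intro ε hε
  obtain ⟨-, hγ1, hγG⟩ := hγ
  obtain ⟨c, hc, hcm⟩ := exists_le_norm_segAvg hγ1 hinj harc
  obtain ⟨S, hS, hSob⟩ := exists_norm_le_Hs0Norm (E := Rn n) (show 1/2 < 1/2 + ε by linarith)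
  refine ⟨(2 + α) * S * (3 / c ^ 6) * (gagliardoSq ((α - 1) / 2) (deriv γ)).toReal,
    fun h ⟨hper, hh, hG⟩ => ?_⟩
  have hper' : Function.Periodic (deriv h) 1 := fun x => by
    rw [← deriv_comp_add_const, funext hper]
  have hα0 : 0 < 2 + α := by linarith [hα.1]
  have hN : 0 ≤ H1Norm (1/2 + ε) h := add_nonneg (Real.sqrt_nonneg _) (Real.sqrt_nonneg _)
  have hM : ∀ u, ‖deriv h u‖ ≤ S * H1Norm (1/2 + ε) h := fun u =>
    (hSob (deriv h) (hh.continuous_deriv le_rfl) hper' hG u).trans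
      (mul_le_mul_of_nonneg_left (Hs0Norm_deriv_le_H1Norm hh) hS)
  have hbound := lintegral_enorm_Rintegrand_le hα hc hγ1 harc hh hM hcm
  have htop := ENNReal.mul_ne_top (ENNReal.ofReal_ne_top
    (r := (2 + α) * (S * H1Norm (1/2 + ε) h) * (3 / c ^ 6))) hγG.ne
  refine ⟨⟨(measurable_Rintegrand hγ1 hh).aestronglyMeasurable,
    hbound.trans_lt htop.lt_top⟩, ?_⟩
  have h1 := ENNReal.toReal_mono htop ((enorm_integral_le_lintegral_enorm _).trans hbound)
  rw [toReal_enorm, ENNReal.toReal_mul, ENNReal.toReal_ofReal (by positivity),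
    Real.norm_eq_abs] at h1
  refine h1.trans (le_of_eq ?_)
  ring

end
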